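/- Let G be a k-connected (k ≥ 1) finite simple graph with n ≥ 9 vertices, e edges, and minimum degree δ. If F(G) ≤ (n − k − 2)·δ³ + δ·(2(k + 2)²δ² − e²)/(k + 2), then G is traceable. -/

import Mathlib

open Finset

/-- The first Zagreb index of a graph: the sum of the squares of the vertex degrees. -/
def zagreb1 {V : Type*} [Fintype V] (G : SimpleGraph V) [DecidableRel G.Adj] : ℝ :=
  ∑ u, (G.degree u : ℝ) ^ 2

/-- The forgotten topological index of a graph: the sum of the cubes of the vertex degrees. -/
def forgottenIndex {V : Type*} [Fintype V] (G : SimpleGraph V) [DecidableRel G.Adj] : ℝ :=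
  ∑ u, (G.degree u : ℝ) ^ 3

/-- The inverse degree of a graph: the sum of the reciprocals of the vertex degrees. -/
noncomputable def invDegree {V : Type*} [Fintype V] (G : SimpleGraph V) [DecidableRel G.Adj] : ℝ :=
  ∑ u, 1 / (G.degree u : ℝ)

/-- The independence number of a graph: the largest cardinality of a set of pairwise
nonadjacent vertices. -/
noncomputable def indepNum {V : Type*} [Fintype V] (G : SimpleGraph V) : ℕ :=
  sSup {k | ∃ s : Finset V, s.card = k ∧ ∀ u ∈ s, ∀ v ∈ s, ¬ G.Adj u v}

/-- A graph is a regular balanced bipartite graph if its vertices can be partitioned into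
two parts of equal size with every edge joining the two parts, and all vertices have the
same degree. -/
def IsRegularBalancedBipartite {V : Type*} [Fintype V] (G : SimpleGraph V) [DecidableRel G.Adj] : Prop :=
  ∃ (A : Finset V) (r : ℕ), 2 * A.card = Fintype.card V ∧
    (∀ u v, G.Adj u v → (u ∈ A ↔ v ∉ A)) ∧ G.IsRegularOfDegree r

/-- A graph is `k`-connected if it has more than `k` vertices and removing any set of
fewer than `k` vertices leaves a connected graph. -/
def IsKConnected {V : Type*} [Fintype V] (G : SimpleGraph V) (k : ℕ) : Prop :=
  k < Fintype.card V ∧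
    ∀ S : Finset V, S.card < k → (G.induce (↑S : Set V)ᶜ).Connected

/-- A graph is traceable if it has a Hamiltonian path. -/
def IsTraceable {V : Type*} [DecidableEq V] (G : SimpleGraph V) : Prop :=
  ∃ (u v : V) (p : G.Walk u v), p.IsHamiltonian

/-!
Suppose `G` is not traceable. Take a longest path, a vertex `d` that it misses and the component
`C` of `d` in the graph left after deleting the path. At least `k` vertices of the path have a
neighbour in `C`, and by rerouting the path their successors, together with `d` and the first
vertex of the path, form an independent set; so its size is at least `k + 2` (Chvátal–Erdős).

If there are at least `k + 2` independent vertices, then `(k + 2)δ ≤ e`, so the right-hand side of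
the hypothesis is at most `nδ³ ≤ F(G)`. Equality must hold throughout: `G` is regular, `e = (k + 2)δ`
and every independent set of size at least `k + 2` is one half of a balanced bipartition of `G`.

In that case a longest path that starts in one half and misses a vertex of it also misses a vertex
`w` of the other half, because it alternates between them. The independent set obtained from `w`
is again one half of the bipartition, but it contains the first vertex of the path, which lies in
the half opposite to `w`.
-/

open SimpleGraph

section Connectivity

variable {V : Type*} [Fintype V] {G : SimpleGraph V} {k : ℕ}

theorem IsKConnected.connected (hG : IsKConnected G k) (hk : 1 ≤ k) : G.Connected := by
  have h := hG.2 ∅ (by rwa [card_empty])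
  rw [coe_empty, Set.compl_empty] at h
  exact G.induceUnivIso.connected_iff.1 h

theorem IsKConnected.minDegree_pos [DecidableRel G.Adj] (hG : IsKConnected G k) (hk : 1 ≤ k) :
    0 < G.minDegree := by
  have : Nontrivial V := Fintype.one_lt_card_iff_nontrivial.1 (hk.trans_lt hG.1)
  exact (hG.connected hk).preconnected.minDegree_pos_of_nontrivial

theorem IsKConnected.le_card_of_boundary_subset {C : Set V} {N : Finset V} {d v : V}
    (hG : IsKConnected G k) (hdC : d ∈ C) (hdN : d ∉ N) (hvC : v ∉ C) (hvN : v ∉ N)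
    (hN : ∀ x ∈ C, ∀ y ∉ C, G.Adj x y → y ∈ N) : k ≤ #N := by
  by_contra! hlt
  obtain ⟨p⟩ := (hG.2 N hlt).preconnected ⟨d, by simpa using hdN⟩ ⟨v, by simpa using hvN⟩
  obtain ⟨⟨⟨x, y⟩, hxy⟩, -, hx, hy⟩ := p.exists_boundary_dart (Subtype.val ⁻¹' C) hdC hvC
  exact y.2 (hN x hx y hy hxy)

end Connectivity

theorem mem_iff_mem_of_isBipartiteWith_compl {V : Type*} {G : SimpleGraph V} {X Y : Set V}
    {v w : V} (hG : G.Connected) (hX : G.IsBipartiteWith X Xᶜ) (hY : G.IsBipartiteWith Y Yᶜ)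
    (hv : v ∈ X ↔ v ∈ Y) : w ∈ X ↔ w ∈ Y := by
  by_contra hw
  obtain ⟨p⟩ := hG.preconnected v w
  obtain ⟨⟨⟨x, y⟩, hxy⟩, -, hx, hy⟩ := p.exists_boundary_dart {u | u ∈ X ↔ u ∈ Y} hv hw
  have hXxy := hX.mem_of_adj hxy
  have hYxy := hY.mem_of_adj hxy
  simp only [Set.mem_compl_iff, Set.mem_ofPred_eq] at hXxy hYxy hx hy
  tauto

theorem exists_isChain_of_mem_componentCompl {V : Type*} {G : SimpleGraph V} {K : Set V}
    {C : G.ComponentCompl K} {x y : V} (hx : x ∈ C) (hy : y ∈ C) :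
    ∃ q : List V, q.IsChain G.Adj ∧ q.Nodup ∧ (∀ v ∈ q, v ∉ K) ∧
      q.head? = some x ∧ q.getLast? = some y := by
  classical
  obtain ⟨hxK, rfl⟩ := hx
  obtain ⟨hyK, hyx⟩ := hy
  obtain ⟨p, hp⟩ := (ConnectedComponent.exact hyx).symm.exists_isPath
  refine ⟨p.support.map Subtype.val, ?_, ?_, ?_, ?_, ?_⟩
  · exact (List.isChain_map _).2 (p.isChain_adj_support.imp fun _ _ h ↦ h)
  · exact hp.support_nodup.map Subtype.val_injective
  · simp only [List.mem_map]
    rintro _ ⟨v, -, rfl⟩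
    exact v.2
  · rw [List.head?_map, List.head?_eq_some_head p.support_ne_nil, p.head_support, Option.map_some]
  · rw [List.getLast?_map, List.getLast?_eq_some_getLast p.support_ne_nil, p.getLast_support,
      Option.map_some]

section Successors

variable {α : Type*} {l : List α} {a b s t : α}

theorem exists_append_of_pair_isInfix (h : [a, s] <:+: l) :
    ∃ A B : List α, l = A ++ B ∧ A.getLast? = some a ∧ B.head? = some s := by
  obtain ⟨A, B, rfl⟩ := h
  exact ⟨A ++ [a], s :: B, by simp, by simp, by simp⟩

theorem eq_of_pair_isInfix_of_nodup (hl : l.Nodup) (ha : [a, s] <:+: l) (hb : [b, s] <:+: l) :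
    a = b := by
  obtain ⟨A, B, rfl⟩ := ha
  obtain ⟨A', B', h⟩ := hb
  have h' : (A ++ [a]) ++ s :: B = (A' ++ [b]) ++ s :: B' := by simpa using h.symm
  obtain ⟨hA, -, -⟩ := (List.append_cons_inj_of_notMem (by grind) (by grind)).1 h'
  exact List.singleton_inj.1 (List.append_inj_right' hA rfl)

theorem head?_ne_of_pair_isInfix_of_nodup (hl : l.Nodup) (h : [a, s] <:+: l) :
    l.head? ≠ some s := by
  obtain ⟨A, B, rfl⟩ := h
  cases A <;> grind

theorem exists_append_of_pair_isInfix_of_pair_isInfix (ha : [a, s] <:+: l) (hb : [b, t] <:+: l)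
    (hst : s ≠ t) :
    (∃ A M B : List α, l = A ++ M ++ B ∧ A.getLast? = some a ∧ M.head? = some s ∧
      M.getLast? = some b ∧ B.head? = some t) ∨
    (∃ A M B : List α, l = A ++ M ++ B ∧ A.getLast? = some b ∧ M.head? = some t ∧
      M.getLast? = some a ∧ B.head? = some s) := by
  obtain ⟨A, B, hl, hA, hB⟩ := exists_append_of_pair_isInfix ha
  obtain ⟨A', B', hl', hA', hB'⟩ := exists_append_of_pair_isInfix hb
  rcases List.append_eq_append_iff.1 (hl.symm.trans hl') with ⟨M, rfl, rfl⟩ | ⟨M, rfl, rfl⟩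
  · have hM : M ≠ [] := by rintro rfl; grind
    exact .inl ⟨A, M, B', hl', hA, List.head?_append_of_ne_nil M hM ▸ hB,
      List.getLast?_append_of_ne_nil A hM ▸ hA', hB'⟩
  · have hM : M ≠ [] := by rintro rfl; grind
    exact .inr ⟨A', M, B, hl, hA', List.head?_append_of_ne_nil M hM ▸ hB',
      List.getLast?_append_of_ne_nil A' hM ▸ hA, hB⟩

open Classical in
/-- The set `N⁺` of the immediate successors in the list `l` of the elements of `N`. -/
noncomputable def successors (l : List α) (N : Finset α) : Finset α :=
  {s ∈ l.toFinset | ∃ a ∈ N, [a, s] <:+: l}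

theorem mem_successors {N : Finset α} : s ∈ successors l N ↔ ∃ a ∈ N, [a, s] <:+: l := by
  simp only [successors, mem_filter, List.mem_toFinset, and_iff_right_iff_imp]
  rintro ⟨a, -, h⟩
  exact h.subset (by simp)

theorem card_le_card_successors {N : Finset α} (hl : l.Nodup)
    (hN : ∀ a ∈ N, ∃ s, [a, s] <:+: l) : #N ≤ #(successors l N) := by
  refine card_le_card_of_forall_subsingleton (fun a s ↦ [a, s] <:+: l) (fun a ha ↦ ?_) ?_
  · obtain ⟨s, hs⟩ := hN a ha
    exact ⟨s, mem_successors.2 ⟨a, ha, hs⟩, hs⟩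
  · rintro s - a ⟨-, ha⟩ b ⟨-, hb⟩
    exact eq_of_pair_isInfix_of_nodup hl ha hb

end Successors

section LongestPath

variable {V : Type*} {G : SimpleGraph V} {l : List V} {a b d s t v x y : V}

/-- A longest path, encoded as the list of its vertices, is a path with the largest possible
number of vertices. -/
structure IsLongestPath (G : SimpleGraph V) (l : List V) : Prop where
  isChain : l.IsChain G.Adj
  nodup : l.Nodup
  length_le : ∀ l' : List V, l'.IsChain G.Adj → l'.Nodup → l'.length ≤ l.length

theorem exists_isLongestPath [Finite V] (G : SimpleGraph V) : ∃ l, IsLongestPath G l := by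
  have := Fintype.ofFinite V
  let S : Set ℕ := {m | ∃ l : List V, l.IsChain G.Adj ∧ l.Nodup ∧ l.length = m}
  have hS : BddAbove S := ⟨Fintype.card V, by rintro _ ⟨l, -, hl, rfl⟩; exact hl.length_le_card⟩
  obtain ⟨l, hc, hn, hlen⟩ := Nat.sSup_mem (s := S) ⟨0, [], by simp⟩ hS
  exact ⟨l, hc, hn, fun l' hc' hn' ↦ hlen ▸ le_csSup hS ⟨l', hc', hn', rfl⟩⟩

theorem isChain_adj_reverse (h : l.IsChain G.Adj) : l.reverse.IsChain G.Adj :=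
  List.isChain_reverse.2 (h.imp fun _ _ h ↦ h.symm)

namespace IsLongestPath

theorem ne_nil [Nonempty V] (hl : IsLongestPath G l) : l ≠ [] := by
  rintro rfl
  simpa using hl.length_le [Classical.arbitrary V] (by simp) (by simp)

theorem isTraceable [DecidableEq V] [Nonempty V] (hl : IsLongestPath G l) (h : ∀ v, v ∈ l) :
    IsTraceable G :=
  ⟨_, _, .ofSupport l hl.ne_nil hl.isChain, Walk.IsPath.isHamiltonian_of_mem
    (Walk.IsPath.mk' (by simpa using hl.nodup)) (by simpa using h)⟩

theorem not_adj_of_head? (hl : IsLongestPath G l) (hv : l.head? = some v) (hx : x ∉ l) :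
    ¬ G.Adj v x := by
  intro hvx
  have hchain : (x :: l).IsChain G.Adj :=
    List.isChain_cons.2 ⟨by simpa [hv] using hvx.symm, hl.isChain⟩
  simpa using hl.length_le _ hchain (List.nodup_cons.2 ⟨hx, hl.nodup⟩)

theorem exists_pair_isInfix_of_adj (hl : IsLongestPath G l) (ha : a ∈ l) (hx : x ∉ l)
    (hax : G.Adj a x) : ∃ s, [a, s] <:+: l := by
  obtain ⟨A, B, rfl⟩ := List.append_of_mem ha
  cases B with
  | nil =>
    have hchain : (A ++ [a] ++ [x]).IsChain G.Adj :=
      List.isChain_append.2 ⟨hl.isChain, by simp, by simpa using hax⟩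
    simpa using hl.length_le _ hchain (by have := hl.nodup; grind)
  | cons s B => exact ⟨s, A, B, by simp⟩

theorem not_adj_head_of_pair_isInfix (hl : IsLongestPath G l) (hv : l.head? = some v)
    (hs : [a, s] <:+: l) (hx : x ∉ l) (hax : G.Adj a x) : ¬ G.Adj v s := by
  intro hvs
  obtain ⟨A, B, rfl, hA, hB⟩ := exists_append_of_pair_isInfix hs
  obtain ⟨hAc, hBc, -⟩ := List.isChain_append.1 hl.isChain
  have hAv : A.head? = some v := by cases A <;> simp_all
  have hchain : (x :: (A.reverse ++ B)).IsChain G.Adj := by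
    simp [List.isChain_append, List.isChain_cons, isChain_adj_reverse hAc, hBc, hA, hB, hAv, hvs,
      hax.symm]
  simpa using hl.length_le _ hchain (by have := hl.nodup; grind)

variable {C : G.ComponentCompl {v | v ∈ l}}

theorem not_adj_of_pair_isInfix (hl : IsLongestPath G l) (hs : [a, s] <:+: l) (hx : x ∈ C)
    (hy : y ∈ C) (hax : G.Adj a x) : ¬ G.Adj s y := by
  intro hsy
  obtain ⟨q, hqc, hqn, hql, hqx, hqy⟩ := exists_isChain_of_mem_componentCompl hx hy
  obtain ⟨A, B, rfl, hA, hB⟩ := exists_append_of_pair_isInfix hs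
  obtain ⟨hAc, hBc, -⟩ := List.isChain_append.1 hl.isChain
  have hchain : (A ++ (q ++ B)).IsChain G.Adj := by
    simp [List.isChain_append, hAc, hBc, hqc, hA, hB, hqx, hqy, hax, hsy.symm]
  have hlen := hl.length_le _ hchain (by have := hl.nodup; grind)
  have : q = [] := by simpa using hlen
  simp [this] at hqx

theorem not_adj_of_append {A M B : List V} (hl : IsLongestPath G (A ++ M ++ B))
    {C : G.ComponentCompl {v | v ∈ A ++ M ++ B}} (hA : A.getLast? = some a)
    (hMs : M.head? = some s) (hMb : M.getLast? = some b) (hB : B.head? = some t)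
    (hx : x ∈ C) (hy : y ∈ C) (hax : G.Adj a x) (hby : G.Adj b y) : ¬ G.Adj s t := by
  intro hst
  obtain ⟨q, hqc, hqn, hql, hqx, hqy⟩ := exists_isChain_of_mem_componentCompl hx hy
  obtain ⟨hAM, hBc, -⟩ := List.isChain_append.1 hl.isChain
  obtain ⟨hAc, hMc, -⟩ := List.isChain_append.1 hAM
  have hchain : (A ++ (q ++ (M.reverse ++ B))).IsChain G.Adj := by
    simp [List.isChain_append, isChain_adj_reverse hMc, hAc, hBc, hqc, hA, hB, hMs, hMb, hqx, hqy,
      hax, hby.symm, hst]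
  have hlen := hl.length_le _ hchain (by have := hl.nodup; grind)
  have : q = [] := List.length_eq_zero_iff.1 (by
    simp only [List.length_append, List.length_reverse] at hlen; omega)
  simp [this] at hqx

theorem not_adj_of_pair_isInfix_of_pair_isInfix (hl : IsLongestPath G l) (hs : [a, s] <:+: l)
    (ht : [b, t] <:+: l) (hx : x ∈ C) (hy : y ∈ C) (hax : G.Adj a x) (hby : G.Adj b y) :
    ¬ G.Adj s t := by
  intro hst
  rcases exists_append_of_pair_isInfix_of_pair_isInfix hs ht hst.ne with
    ⟨A, M, B, rfl, hA, hMs, hMb, hB⟩ | ⟨A, M, B, rfl, hA, hMt, hMa, hB⟩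
  · exact hl.not_adj_of_append hA hMs hMb hB hx hy hax hby hst
  · exact hl.not_adj_of_append hA hMt hMa hB hy hx hby hax hst.symm

end IsLongestPath

open Classical in
/-- The vertices of the path `l` (a list of vertices) that have a neighbour in `C`. -/
noncomputable def attachments (G : SimpleGraph V) (l : List V) (C : Set V) : Finset V :=
  {a ∈ l.toFinset | ∃ x ∈ C, G.Adj a x}

theorem mem_attachments {C : Set V} :
    a ∈ attachments G l C ↔ a ∈ l ∧ ∃ x ∈ C, G.Adj a x := by
  simp [attachments]

namespace IsLongestPath

variable {C : G.ComponentCompl {v | v ∈ l}}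

theorem le_card_attachments [Fintype V] {k : ℕ} (hl : IsLongestPath G l)
    (hG : IsKConnected G k) (hv : l.head? = some v) : k ≤ #(attachments G l C) := by
  obtain ⟨d, hd⟩ := C.nonempty
  have hvl : v ∈ l := List.mem_of_mem_head? hv
  refine hG.le_card_of_boundary_subset hd (fun h ↦ C.notMem_of_mem hd (mem_attachments.1 h).1)
    (fun h ↦ C.notMem_of_mem h hvl) (fun h ↦ ?_) (fun x hx y hy hxy ↦ ?_)
  · obtain ⟨-, x, hx, hvx⟩ := mem_attachments.1 h
    exact hl.not_adj_of_head? hv (C.notMem_of_mem hx) hvx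
  · exact mem_attachments.2 ⟨by_contra fun h ↦ hy (C.mem_of_adj x y hx h hxy), x, hx, hxy.symm⟩

theorem card_attachments_le_card_successors (hl : IsLongestPath G l) :
    #(attachments G l C) ≤ #(successors l (attachments G l C)) := by
  refine card_le_card_successors hl.nodup fun a ha ↦ ?_
  obtain ⟨hal, x, hx, hax⟩ := mem_attachments.1 ha
  exact hl.exists_pair_isInfix_of_adj hal (C.notMem_of_mem hx) hax

theorem isIndepSet_insert_insert_successors (hl : IsLongestPath G l) (hv : l.head? = some v)
    (hd : d ∈ C) :
    G.IsIndepSet (insert d (insert v (successors l (attachments G l C) : Set V))) := by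
  have hsucc {s : V} (hs : s ∈ successors l (attachments G l C)) :
      ∃ a x, [a, s] <:+: l ∧ x ∈ C ∧ G.Adj a x := by
    obtain ⟨a, ha, has⟩ := mem_successors.1 hs
    obtain ⟨-, x, hx, hax⟩ := mem_attachments.1 ha
    exact ⟨a, x, has, hx, hax⟩
  have : Std.Symm fun u w ↦ ¬ G.Adj u w := ⟨fun _ _ h h' ↦ h h'.symm⟩
  refine Set.pairwise_insert_of_symm.2 ⟨Set.pairwise_insert_of_symm.2 ⟨?_, ?_⟩, ?_⟩
  · intro s hs t ht _
    obtain ⟨a, x, has, hx, hax⟩ := hsucc hs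
    obtain ⟨b, y, hbt, hy, hby⟩ := hsucc ht
    exact hl.not_adj_of_pair_isInfix_of_pair_isInfix has hbt hx hy hax hby
  · intro s hs _
    obtain ⟨a, x, has, hx, hax⟩ := hsucc hs
    exact hl.not_adj_head_of_pair_isInfix hv has (C.notMem_of_mem hx) hax
  · rintro s (rfl | hs) - hds
    · exact hl.not_adj_of_head? hv (C.notMem_of_mem hd) hds.symm
    · obtain ⟨a, x, has, hx, hax⟩ := hsucc hs
      exact hl.not_adj_of_pair_isInfix has hx hd hax hds.symm

theorem exists_isIndepSet_of_notMem [Fintype V] {k : ℕ} (hl : IsLongestPath G l)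
    (hG : IsKConnected G k) (hv : l.head? = some v) (hd : d ∉ l) :
    ∃ I : Finset V, d ∈ I ∧ v ∈ I ∧ G.IsIndepSet I ∧ k + 2 ≤ #I := by
  classical
  let C : G.ComponentCompl {v | v ∈ l} := G.componentComplMk hd
  have hdC : d ∈ C := G.componentComplMk_mem hd
  let S := successors l (attachments G l C)
  have hSl {s : V} (hs : s ∈ S) : s ∈ l ∧ l.head? ≠ some s := by
    obtain ⟨a, -, has⟩ := mem_successors.1 hs
    exact ⟨has.subset (by simp), head?_ne_of_pair_isInfix_of_nodup hl.nodup has⟩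
  have hvS : v ∉ S := fun h ↦ (hSl h).2 hv
  have hdvS : d ∉ insert v S := by
    rw [mem_insert, not_or]
    exact ⟨fun h ↦ hd (h ▸ List.mem_of_mem_head? hv), fun h ↦ hd (hSl h).1⟩
  refine ⟨insert d (insert v S), by simp, by simp, ?_, ?_⟩
  · rw [coe_insert, coe_insert]
    exact hl.isIndepSet_insert_insert_successors hv hdC
  · rw [card_insert_of_notMem hdvS, card_insert_of_notMem hvS]
    have hkS : k ≤ #S := (hl.le_card_attachments hG hv).trans hl.card_attachments_le_card_successors
    omega

end IsLongestPath

end LongestPath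

theorem countP_not_le_countP_of_isChain {α : Type*} {l : List α} {a : α} {p : α → Bool}
    (hl : l.IsChain fun u w ↦ p u ≠ p w) (ha : l.head? = some a) (hpa : p a) :
    l.countP (fun u ↦ !p u) ≤ l.countP p := by
  have halt : (l.map p).IsChain (· ≠ ·) := (List.isChain_map p).2 hl
  have htrue := halt.two_mul_count_bool_eq_ite true
  have hsum := List.count_false_add_count_true (l.map p)
  have hcount_true : (l.map p).count true = l.countP p := by
    simp [List.count, List.countP_map, Function.comp_def]
  have hcount_false : (l.map p).count false = l.countP fun u ↦ !p u := by
    simp [List.count, List.countP_map, Function.comp_def]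
  simp only [hcount_true, hcount_false, List.head?_map, ha, hpa, List.length_map, Option.map_some,
    beq_self_eq_true, if_true] at htrue hsum
  split_ifs at htrue <;> omega

section Bipartite

variable {V : Type*} {G : SimpleGraph V} {l : List V} {X : Finset V} {d v : V}

theorem card_filter_toFinset_of_nodup [DecidableEq V] (hl : l.Nodup) (p : V → Bool) :
    #{u ∈ l.toFinset | p u} = l.countP p := by
  rw [← List.toFinset_filter, List.toFinset_card_of_nodup (hl.filter _),
    List.countP_eq_length_filter]

theorem card_toFinset_sdiff_le_card_toFinset_inter [DecidableEq V] (hl : l.IsChain G.Adj)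
    (hnodup : l.Nodup) (hX : G.IsBipartiteWith X (X : Set V)ᶜ) (hv : l.head? = some v)
    (hvX : v ∈ X) :
    #(l.toFinset \ X) ≤ #(l.toFinset ∩ X) := by
  have halt : l.IsChain fun u w ↦ decide (u ∈ X) ≠ decide (w ∈ X) := by
    refine hl.imp fun u w huw h ↦ ?_
    have := hX.mem_of_adj huw
    simp only [decide_eq_decide, mem_coe, Set.mem_compl_iff] at h this
    tauto
  have hcount := countP_not_le_countP_of_isChain halt hv (by simpa using hvX)
  rw [← card_filter_toFinset_of_nodup hnodup, ← card_filter_toFinset_of_nodup hnodup] at hcount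
  simpa only [Bool.not_eq_true', decide_eq_false_iff_not, decide_eq_true_eq, filter_mem_eq_inter,
    ← sdiff_eq_filter] using hcount

theorem IsLongestPath.exists_notMem_of_isBipartiteWith_compl [Fintype V]
    (hl : IsLongestPath G l) (hX : G.IsBipartiteWith X (X : Set V)ᶜ)
    (hcard : 2 * #X ≤ Fintype.card V) (hv : l.head? = some v) (hvX : v ∈ X) (hdX : d ∈ X)
    (hd : d ∉ l) : ∃ w ∉ X, w ∉ l := by
  classical
  by_contra! h
  have hcompl : #Xᶜ ≤ #(l.toFinset \ X) := card_le_card fun w hw ↦ by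
    simpa [mem_compl.1 hw] using h w (mem_compl.1 hw)
  have hle := card_toFinset_sdiff_le_card_toFinset_inter hl.isChain hl.nodup hX hv hvX
  have hlt : #(l.toFinset ∩ X) < #X := card_lt_card
    (Finset.ssubset_iff_subset_ne.2 ⟨inter_subset_right, fun h ↦ hd (by
      rw [← h] at hdX; simpa using (mem_inter.1 hdX).1)⟩)
  rw [card_compl] at hcompl
  omega

/-- Without independent sets of `k + 2` vertices this is the Chvátal–Erdős condition. -/
theorem isTraceable_of_forall_isIndepSet_isBipartiteWith_compl [Fintype V] [DecidableEq V]
    {k : ℕ} (hk : 1 ≤ k) (hG : IsKConnected G k)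
    (hI : ∀ I : Finset V, G.IsIndepSet I → k + 2 ≤ #I →
      2 * #I ≤ Fintype.card V ∧ G.IsBipartiteWith I (I : Set V)ᶜ) :
    IsTraceable G := by
  obtain ⟨l, hl⟩ := exists_isLongestPath G
  have hconn := hG.connected hk
  have := hconn.nonempty
  have hv := List.head?_eq_some_head hl.ne_nil
  by_contra hnt
  obtain ⟨d, hd⟩ : ∃ d, d ∉ l := by
    by_contra! h
    exact hnt (hl.isTraceable h)
  obtain ⟨X, hdX, hvX, hXi, hkX⟩ := hl.exists_isIndepSet_of_notMem hG hv hd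
  obtain ⟨hXcard, hXbip⟩ := hI X hXi hkX
  obtain ⟨w, hwX, hwl⟩ := hl.exists_notMem_of_isBipartiteWith_compl hXbip hXcard hv hvX hdX hd
  obtain ⟨Y, hwY, hvY, hYi, hkY⟩ := hl.exists_isIndepSet_of_notMem hG hv hwl
  obtain ⟨-, hYbip⟩ := hI Y hYi hkY
  exact hwX ((mem_iff_mem_of_isBipartiteWith_compl hconn hXbip hYbip (iff_of_true hvX hvY)).2 hwY)

end Bipartite

section Degree

variable {V : Type*} [Fintype V] {G : SimpleGraph V} [DecidableRel G.Adj]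

section IndepSet

variable {I : Finset V}

theorem sum_degree_eq_card_biUnion_incidenceFinset_of_isIndepSet [DecidableEq V]
    (hI : G.IsIndepSet I) :
    ∑ u ∈ I, G.degree u = #(I.biUnion fun u ↦ G.incidenceFinset u) := by
  have hdisj : (I : Set V).PairwiseDisjoint fun u ↦ G.incidenceFinset u := by
    refine fun u hu v hv huv ↦ Finset.disjoint_left.2 fun e heu hev ↦ hI hu hv huv ?_
    rw [mem_incidenceFinset] at heu hev
    exact G.adj_of_mem_incidenceSet huv heu hev
  simp only [card_biUnion hdisj, card_incidenceFinset_eq_degree]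

theorem biUnion_incidenceFinset_subset_edgeFinset [DecidableEq V] :
    (I.biUnion fun u ↦ G.incidenceFinset u) ⊆ G.edgeFinset :=
  biUnion_subset.2 fun u _ ↦ G.incidenceFinset_subset u

theorem sum_degree_le_card_edgeFinset_of_isIndepSet (hI : G.IsIndepSet I) :
    ∑ u ∈ I, G.degree u ≤ #G.edgeFinset := by
  classical
  rw [sum_degree_eq_card_biUnion_incidenceFinset_of_isIndepSet hI]
  exact card_le_card biUnion_incidenceFinset_subset_edgeFinset

theorem isBipartiteWith_compl_of_card_edgeFinset_le_sum_degree (hI : G.IsIndepSet I)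
    (h : #G.edgeFinset ≤ ∑ u ∈ I, G.degree u) : G.IsBipartiteWith I (I : Set V)ᶜ := by
  classical
  rw [sum_degree_eq_card_biUnion_incidenceFinset_of_isIndepSet hI] at h
  refine ⟨disjoint_compl_right, fun u v huv ↦ ?_⟩
  have hmem : s(u, v) ∈ I.biUnion fun u ↦ G.incidenceFinset u := by
    rw [eq_of_subset_of_card_le biUnion_incidenceFinset_subset_edgeFinset h]
    exact mem_edgeFinset.2 huv
  obtain ⟨w, hw, hwuv⟩ := mem_biUnion.1 hmem
  rw [mem_incidenceFinset] at hwuv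
  rcases Sym2.mem_iff.1 hwuv.2 with rfl | rfl
  · exact .inl ⟨hw, fun hv ↦ hI hw hv huv.ne huv⟩
  · exact .inr ⟨fun hu ↦ hI hu hw huv.ne huv, hw⟩

theorem card_mul_minDegree_le_card_edgeFinset (hI : G.IsIndepSet I) :
    #I * G.minDegree ≤ #G.edgeFinset :=
  (card_nsmul_le_sum _ _ _ fun u _ ↦ G.minDegree_le_degree u).trans
    (sum_degree_le_card_edgeFinset_of_isIndepSet hI)

theorem two_mul_card_le_card_of_isRegularOfDegree {r : ℕ} (hr : 0 < r)
    (hG : G.IsRegularOfDegree r) (hI : G.IsIndepSet I) : 2 * #I ≤ Fintype.card V := by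
  refine Nat.le_of_mul_le_mul_right ?_ hr
  calc 2 * #I * r = 2 * ∑ u ∈ I, G.degree u := by simp [hG.degree_eq, mul_assoc]
    _ ≤ 2 * #G.edgeFinset := by
        gcongr; exact sum_degree_le_card_edgeFinset_of_isIndepSet hI
    _ = ∑ u, G.degree u := G.sum_degrees_eq_twice_card_edges.symm
    _ = Fintype.card V * r := by simp [hG.degree_eq]

end IndepSet

theorem minDegree_pow_three_le_degree_pow_three (u : V) :
    (G.minDegree : ℝ) ^ 3 ≤ (G.degree u : ℝ) ^ 3 := by
  gcongr
  exact G.minDegree_le_degree u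

theorem card_mul_minDegree_pow_three_le_forgottenIndex :
    Fintype.card V * (G.minDegree : ℝ) ^ 3 ≤ forgottenIndex G := by
  simpa [forgottenIndex] using card_nsmul_le_sum univ _ _ fun u _ ↦
    minDegree_pow_three_le_degree_pow_three u

theorem isRegularOfDegree_minDegree_of_forgottenIndex_le
    (h : forgottenIndex G ≤ Fintype.card V * (G.minDegree : ℝ) ^ 3) :
    G.IsRegularOfDegree G.minDegree := by
  have hsum : ∑ _u : V, (G.minDegree : ℝ) ^ 3 = ∑ u, (G.degree u : ℝ) ^ 3 := by
    simpa [forgottenIndex] using card_mul_minDegree_pow_three_le_forgottenIndex.antisymm h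
  intro u
  have hu := (sum_eq_sum_iff_of_le fun u _ ↦ minDegree_pow_three_le_degree_pow_three u).1 hsum u
    (mem_univ u)
  exact_mod_cast ((pow_left_inj₀ (by positivity) (by positivity) three_ne_zero).1 hu).symm

theorem isRegularOfDegree_and_card_edgeFinset_eq_of_forgottenIndex_le {m : ℕ} (hm : 0 < m)
    (hδ : 0 < G.minDegree) (he : m * G.minDegree ≤ #G.edgeFinset)
    (h : forgottenIndex G ≤ ((Fintype.card V : ℝ) - m) * (G.minDegree : ℝ) ^ 3
        + (G.minDegree : ℝ) * (2 * (m : ℝ) ^ 2 * (G.minDegree : ℝ) ^ 2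
            - (#G.edgeFinset : ℝ) ^ 2) / m) :
    G.IsRegularOfDegree G.minDegree ∧ #G.edgeFinset = m * G.minDegree := by
  have hF := card_mul_minDegree_pow_three_le_forgottenIndex (G := G)
  have he' : (m * G.minDegree : ℝ) ≤ #G.edgeFinset := by exact_mod_cast he
  have hm' : (0 : ℝ) < m := by exact_mod_cast hm
  have hδ' : (0 : ℝ) < G.minDegree := by exact_mod_cast hδ
  have hsplit : forgottenIndex G + G.minDegree / m * ((#G.edgeFinset : ℝ) ^ 2
      - (m * G.minDegree) ^ 2) ≤ Fintype.card V * (G.minDegree : ℝ) ^ 3 := by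
    refine le_sub_iff_add_le.1 (h.trans_eq ?_)
    field_simp
    ring
  have hsq : (m * G.minDegree : ℝ) ^ 2 ≤ (#G.edgeFinset : ℝ) ^ 2 := by gcongr
  have hexcess : (#G.edgeFinset : ℝ) ^ 2 - (m * G.minDegree) ^ 2 ≤ 0 :=
    nonpos_of_mul_nonpos_right (by linarith) (div_pos hδ' hm')
  refine ⟨isRegularOfDegree_minDegree_of_forgottenIndex_le ?_, he.antisymm' ?_⟩
  · have := mul_nonneg (div_pos hδ' hm').le (sub_nonneg.2 hsq)
    linarith
  · exact_mod_cast (sq_le_sq₀ (by positivity) (by positivity)).1 (sub_nonpos.1 hexcess)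

end Degree

theorem stmt12_general {V : Type*} [Fintype V] [DecidableEq V] (G : SimpleGraph V)
    [DecidableRel G.Adj] (k : ℕ) (hk : 1 ≤ k) (hconn : IsKConnected G k)
    (h : forgottenIndex G ≤ ((Fintype.card V : ℝ) - k - 2) * (G.minDegree : ℝ) ^ 3
        + (G.minDegree : ℝ) * (2 * ((k : ℝ) + 2) ^ 2 * (G.minDegree : ℝ) ^ 2
            - (G.edgeFinset.card : ℝ) ^ 2) / ((k : ℝ) + 2)) :
    IsTraceable G := by
  have hδ := hconn.minDegree_pos hk
  refine isTraceable_of_forall_isIndepSet_isBipartiteWith_compl hk hconn fun I hI hkI ↦ ?_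
  have hkδ : (k + 2) * G.minDegree ≤ #G.edgeFinset :=
    (Nat.mul_le_mul_right _ hkI).trans (card_mul_minDegree_le_card_edgeFinset hI)
  obtain ⟨hreg, he⟩ := isRegularOfDegree_and_card_edgeFinset_eq_of_forgottenIndex_le
    (m := k + 2) (by positivity) hδ hkδ (by push_cast; rwa [← sub_sub])
  refine ⟨two_mul_card_le_card_of_isRegularOfDegree hδ hreg hI,
    isBipartiteWith_compl_of_card_edgeFinset_le_sum_degree hI ?_⟩
  calc #G.edgeFinset = (k + 2) * G.minDegree := he
    _ ≤ #I * G.minDegree := by gcongr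
    _ ≤ ∑ u ∈ I, G.degree u := card_nsmul_le_sum _ _ _ fun u _ ↦ G.minDegree_le_degree u

/-- If `G` is a `k`-connected (`k ≥ 1`) graph with `n ≥ 9` vertices, `e` edges, and minimum
degree `δ`, and `F(G) ≤ (n − k − 2)δ³ + δ(2(k+2)²δ² − e²)/(k+2)`, then `G` is traceable. -/
theorem stmt12 {V : Type*} [Fintype V] [DecidableEq V] (G : SimpleGraph V) [DecidableRel G.Adj]
    (k : ℕ) (hk : 1 ≤ k) (hconn : IsKConnected G k) (hn : 9 ≤ Fintype.card V)
    (h : forgottenIndex G ≤ ((Fintype.card V : ℝ) - k - 2) * (G.minDegree : ℝ) ^ 3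
        + (G.minDegree : ℝ) * (2 * ((k : ℝ) + 2) ^ 2 * (G.minDegree : ℝ) ^ 2
            - (G.edgeFinset.card : ℝ) ^ 2) / ((k : ℝ) + 2)) :
    IsTraceable G :=
  stmt12_general G k hk hconn h
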